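/- arXiv:2506.08242 — 2 statements merged into one kernel-verified Lean document; each statement's English description precedes it below -/
import Mathlib

section
/- Let u be a pair potential that is stable with constant B ≥ 0 and regular. Then for every bounded measurable set Λ ⊂ ℝ^d and every z ∈ ℂ with |z| < z₀, the grand canonical partition function satisfies Ξ_Λ(z) ≠ 0. -/
open MeasureTheory Bornology

noncomputable section

/-- Boltzmann factor `e^{-β t}` with the convention `e^{-β(+∞)} = 0`. -/
def boltz (β : ℝ) (t : EReal) : ℝ :=
  if t = ⊤ then 0 else Real.exp (-β * t.toReal)

/-- Hamiltonian of a pair potential: `H(x₁,…,xₙ) = ∑_{i<j} u(xᵢ - xⱼ)`. -/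
def Ham {d : ℕ} (u : (Fin d → ℝ) → EReal) (n : ℕ) (x : Fin n → (Fin d → ℝ)) : EReal :=
  ∑ p ∈ Finset.univ.filter (fun p : Fin n × Fin n => p.1 < p.2), u (x p.1 - x p.2)

/-- A pair potential: even, measurable, bounded from below. -/
def IsPairPotential {d : ℕ} (u : (Fin d → ℝ) → EReal) : Prop :=
  Measurable u ∧ (∀ x, u (-x) = u x) ∧ ∃ m : ℝ, ∀ x, (m : EReal) ≤ u x

/-- Stability with constant `B`: `H(x₁,…,xₙ) ≥ -Bn`. -/
def IsStable {d : ℕ} (u : (Fin d → ℝ) → EReal) (B : ℝ) : Prop :=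
  ∀ (n : ℕ) (x : Fin n → (Fin d → ℝ)), ((-(B * n) : ℝ) : EReal) ≤ Ham u n x

/-- Mayer function `f_β = e^{-βu} - 1`. -/
def mayer {d : ℕ} (β : ℝ) (u : (Fin d → ℝ) → EReal) (x : Fin d → ℝ) : ℝ :=
  boltz β (u x) - 1

/-- Regularity: the Mayer function is integrable. -/
def IsRegularPP {d : ℕ} (β : ℝ) (u : (Fin d → ℝ) → EReal) : Prop :=
  Integrable (mayer β u)

/-- `C_β(u) = ∫ |e^{-βu} - 1|`. -/
def Creg {d : ℕ} (β : ℝ) (u : (Fin d → ℝ) → EReal) : ℝ :=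
  ∫ x, |mayer β u x|

/-- The cartesian power `Λ^k`. -/
def cube {d : ℕ} (Λ : Set (Fin d → ℝ)) (k : ℕ) : Set (Fin k → (Fin d → ℝ)) :=
  Set.univ.pi fun _ => Λ

/-- Grand canonical partition function `Ξ_Λ(z)`. -/
def Xi {d : ℕ} (β : ℝ) (u : (Fin d → ℝ) → EReal) (Λ : Set (Fin d → ℝ)) (z : ℂ) : ℂ :=
  ∑' k : ℕ, z ^ k / (Nat.factorial k : ℂ) *
    ((∫ y in cube Λ k, boltz β (Ham u k y) : ℝ) : ℂ)

/-- `θ_Λ^{(n)}(z; x₁,…,xₙ)`. -/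
def theta {d : ℕ} (β : ℝ) (u : (Fin d → ℝ) → EReal) (Λ : Set (Fin d → ℝ)) (n : ℕ)
    (z : ℂ) (x : Fin n → (Fin d → ℝ)) : ℂ :=
  (Xi β u Λ z)⁻¹ * ∑' k : ℕ, z ^ (n + k) / (Nat.factorial k : ℂ) *
    ((∫ y in cube Λ k, boltz β (Ham u (n + k) (Fin.append x y)) : ℝ) : ℂ)

end

/-!
Let `a(f)` denote the annihilation operator `(a(f) g)(s) = ∫ f(y) g(y, s) dy` on bounded functions
of finite configurations. These operators commute, so `f ↦ exp (a(f))` turns sums into products.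
Let `W` be the total Boltzmann weight, `ζ = e^{2βB+1}` and `G(s) = W(s) / ζ^{|s|}`, which is bounded
by stability. Then `P = exp (zζ a(1)) G` satisfies `P(∅) = Ξ_Λ(z)`, and expanding the
interaction of one particle `x` with the rest gives the Kirkwood–Salsburg equation

  `P(x, s) = ζ⁻¹ ∏_{y ∈ s} e^{-βu(x - y)} · (exp (zζ a(f_x)) P)(s)`,  `f_x(y) = e^{-βu(x - y)} - 1`.

Stability yields in every configuration a particle `x` for which the product is at most `e^{2βB}`.
Hence if `P(∅) = 0`, then `‖P‖ ≤ exp (|z| ζ C_β(u) - 1) ‖P‖`, so `P = 0` for `|z| < z₀`. Inverting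
the exponential gives `G = 0`, which contradicts `G(∅) = 1`.
-/

section BoundedOperators

variable {E : Type*} [NormedAddCommGroup E] [NormedSpace ℂ E]

theorem norm_pow_apply_le (T : E →L[ℂ] E) (n : ℕ) (v : E) : ‖(T ^ n) v‖ ≤ ‖T‖ ^ n * ‖v‖ := by
  induction n with
  | zero => simp
  | succ n ih =>
    calc ‖(T ^ (n + 1)) v‖ = ‖T ((T ^ n) v)‖ := by rw [pow_succ', mul_apply_eq_comp]
      _ ≤ ‖T‖ * (‖T‖ ^ n * ‖v‖) := T.le_opNorm_of_le ih
      _ = ‖T‖ ^ (n + 1) * ‖v‖ := by ring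

variable [CompleteSpace E]

theorem hasSum_exp_apply (T : E →L[ℂ] E) (v : E) :
    HasSum (fun n : ℕ => (n.factorial : ℂ)⁻¹ • (T ^ n) v) (NormedSpace.exp T v) :=
  (NormedSpace.exp_series_hasSum_exp' (𝕂 := ℂ) T).mapL (ContinuousLinearMap.apply ℂ E v)

theorem norm_exp_apply_le (T : E →L[ℂ] E) (v : E) :
    ‖NormedSpace.exp T v‖ ≤ Real.exp ‖T‖ * ‖v‖ := by
  have hexp : HasSum (fun n : ℕ => ‖T‖ ^ n / n.factorial * ‖v‖) (Real.exp ‖T‖ * ‖v‖) := by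
    rw [Real.exp_eq_exp_ℝ]
    exact (NormedSpace.expSeries_div_hasSum_exp ‖T‖).mul_right ‖v‖
  refine (hasSum_exp_apply T v).norm_le_of_bounded hexp fun n => ?_
  rw [norm_smul, norm_inv, Complex.norm_natCast, div_eq_inv_mul, mul_assoc]
  exact mul_le_mul_of_nonneg_left (norm_pow_apply_le T n v) (by positivity)

theorem eq_zero_of_exp_apply_eq_zero {T : E →L[ℂ] E} {v : E} (h : NormedSpace.exp T v = 0) :
    v = 0 := by
  let +nondep : NormedAlgebra ℚ (E →L[ℂ] E) := .restrictScalars ℚ ℂ _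
  have hinv : NormedSpace.exp (-T) * NormedSpace.exp T = 1 := by
    rw [← NormedSpace.exp_add_of_commute (Commute.refl T).neg_left, neg_add_cancel,
      NormedSpace.exp_zero]
  calc v = (NormedSpace.exp (-T) * NormedSpace.exp T) v := by rw [hinv, one_apply_eq_self]
    _ = 0 := by rw [mul_apply_eq_comp, h, map_zero]

end BoundedOperators

section ConfigurationFunctions

/-- The bounded functions of a finite configuration of points of `X` that pull back to a measurable
function on `X ^ k` for each `k`. A configuration is a multiset, so that these functions are
symmetric by construction. -/
def measurableConfigSubmodule (X : Type*) [MeasurableSpace X] :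
    Submodule ℂ (lp (fun _ : Multiset X => ℂ) ⊤) where
  carrier := {g | ∀ k : ℕ, Measurable fun v : Fin k → X => g ↑(List.ofFn v)}
  add_mem' hg hh k := (hg k).add (hh k)
  zero_mem' _ := measurable_const
  smul_mem' c _ hg k := (hg k).const_smul c

theorem isClosed_measurableConfigSubmodule {X : Type*} [MeasurableSpace X] :
    IsClosed (measurableConfigSubmodule X : Set (lp (fun _ : Multiset X => ℂ) ⊤)) := by
  refine IsSeqClosed.isClosed fun g h hg hlim k => ?_
  refine measurable_of_tendsto_metrizable (fun n => hg n k) (tendsto_pi_nhds.2 fun v => ?_)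
  exact ((lp.evalCLM ℂ (fun _ : Multiset X => ℂ) ⊤ ↑(List.ofFn v)).continuous.tendsto h).comp hlim

/-- The Banach space of bounded measurable functions of a finite configuration, in the sup norm.
It is a type synonym so that instance search does not unfold the ambient `ℓ^∞` algebra. -/
def ConfigFun (X : Type*) [MeasurableSpace X] : Type _ := measurableConfigSubmodule X

namespace ConfigFun

variable {X : Type*} [MeasurableSpace X]

noncomputable instance : NormedAddCommGroup (ConfigFun X) :=
  inferInstanceAs (NormedAddCommGroup (measurableConfigSubmodule X))

noncomputable instance : NormedSpace ℂ (ConfigFun X) :=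
  inferInstanceAs (NormedSpace ℂ (measurableConfigSubmodule X))

instance : CompleteSpace (ConfigFun X) :=
  isClosed_measurableConfigSubmodule.completeSpace_coe

instance : FunLike (ConfigFun X) (Multiset X) ℂ where
  coe g := g.1
  coe_injective _ _ hgh := Subtype.ext (lp.ext hgh)

@[ext]
theorem ext {g h : ConfigFun X} (hgh : ∀ s, g s = h s) : g = h :=
  DFunLike.ext g h hgh

@[simp]
theorem zero_apply (s : Multiset X) : (0 : ConfigFun X) s = 0 :=
  rfl

@[simp]
theorem add_apply (g h : ConfigFun X) (s : Multiset X) : (g + h) s = g s + h s :=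
  rfl

@[simp]
theorem smul_apply (c : ℂ) (g : ConfigFun X) (s : Multiset X) : (c • g) s = c * g s :=
  rfl

/-- Evaluation at a configuration, as a bounded functional. -/
noncomputable def eval (s : Multiset X) : ConfigFun X →L[ℂ] ℂ :=
  lp.evalCLM ℂ (fun _ : Multiset X => ℂ) ⊤ s ∘L (measurableConfigSubmodule X).subtypeL

@[simp]
theorem eval_apply (s : Multiset X) (g : ConfigFun X) : eval s g = g s :=
  rfl

theorem norm_apply_le (g : ConfigFun X) (s : Multiset X) : ‖g s‖ ≤ ‖g‖ :=
  lp.norm_apply_le_norm ENNReal.top_ne_zero g.1 s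

theorem norm_le {g : ConfigFun X} {c : ℝ} (hc : 0 ≤ c) (h : ∀ s, ‖g s‖ ≤ c) : ‖g‖ ≤ c :=
  lp.norm_le_of_forall_le hc h

theorem measurable_ofFn (g : ConfigFun X) (k : ℕ) :
    Measurable fun v : Fin k → X => g ↑(List.ofFn v) :=
  g.2 k

/-- The element of `ConfigFun X` given by a bounded measurable function. -/
def ofBound (g : Multiset X → ℂ) (c : ℝ) (hc : ∀ s, ‖g s‖ ≤ c)
    (hg : ∀ k : ℕ, Measurable fun v : Fin k → X => g ↑(List.ofFn v)) : ConfigFun X :=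
  ⟨⟨g, memℓp_infty ⟨c, Set.forall_mem_range.2 hc⟩⟩, hg⟩

@[simp]
theorem ofBound_apply (g : Multiset X → ℂ) (c : ℝ) (hc : ∀ s, ‖g s‖ ≤ c)
    (hg : ∀ k : ℕ, Measurable fun v : Fin k → X => g ↑(List.ofFn v)) (s : Multiset X) :
    ofBound g c hc hg s = g s :=
  rfl

theorem hasSum_exp_smul_apply (z : ℂ) (T : ConfigFun X →L[ℂ] ConfigFun X) (g : ConfigFun X)
    (s : Multiset X) :
    HasSum (fun k : ℕ => z ^ k / k.factorial * (T ^ k) g s) (NormedSpace.exp (z • T) g s) := by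
  simpa only [smul_pow, _root_.smul_apply, smul_apply, eval_apply, div_eq_inv_mul, mul_assoc]
    using (hasSum_exp_apply (z • T) g).mapL (eval s)

theorem measurable_cons_ofFn (g : ConfigFun X) (k : ℕ) :
    Measurable fun p : X × (Fin k → X) => g (p.1 ::ₘ ↑(List.ofFn p.2)) := by
  have h := (g.measurable_ofFn (k + 1)).comp
    (MeasurableEquiv.piFinSuccAbove (fun _ => X) 0).symm.measurable
  simpa [Function.comp_def, Fin.insertNthEquiv, List.ofFn_cons] using h

theorem measurable_cons_cons (g : ConfigFun X) (s : Multiset X) :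
    Measurable fun p : X × X => g (p.1 ::ₘ p.2 ::ₘ s) := by
  induction s using Quotient.inductionOn with | _ l => ?_
  have hcons : Measurable fun y : X => (Fin.cons y l.get : Fin (l.length + 1) → X) := by
    simpa [Function.comp_def, Fin.insertNthEquiv] using
      (MeasurableEquiv.piFinSuccAbove (fun _ => X) 0).symm.measurable.comp
        (measurable_prodMk_right (y := l.get))
  simpa [Function.comp_def, List.ofFn_cons] using (g.measurable_cons_ofFn (l.length + 1)).comp
    (measurable_fst.prodMk (hcons.comp measurable_snd))

theorem measurable_cons (g : ConfigFun X) (s : Multiset X) : Measurable fun y => g (y ::ₘ s) := by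
  induction s using Quotient.inductionOn with | _ l => ?_
  simpa [Function.comp_def] using
    (g.measurable_cons_ofFn l.length).comp (measurable_prodMk_right (y := l.get))

section Annihilation

variable {μ : Measure X} {f : X → ℂ}

theorem integrable_mul_cons (hf : Integrable f μ) (g : ConfigFun X) (s : Multiset X) :
    Integrable (fun y => f y * g (y ::ₘ s)) μ :=
  hf.mul_bdd (c := ‖g‖) (g.measurable_cons s).aestronglyMeasurable
    (.of_forall fun y => g.norm_apply_le (y ::ₘ s))

theorem norm_integral_mul_cons_le (hf : Integrable f μ) (g : ConfigFun X) (s : Multiset X) :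
    ‖∫ y, f y * g (y ::ₘ s) ∂μ‖ ≤ (∫ y, ‖f y‖ ∂μ) * ‖g‖ := by
  rw [← integral_mul_const]
  refine norm_integral_le_of_norm_le (hf.norm.mul_const ‖g‖) (.of_forall fun y => ?_)
  rw [norm_mul]
  exact mul_le_mul_of_nonneg_left (g.norm_apply_le _) (norm_nonneg _)

theorem measurable_integral_mul_cons [SFinite μ] (hf : Measurable f) (g : ConfigFun X) (k : ℕ) :
    Measurable fun v : Fin k → X => ∫ y, f y * g (y ::ₘ ↑(List.ofFn v)) ∂μ :=
  ((hf.comp measurable_snd).mul ((g.measurable_cons_ofFn k).comp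
    measurable_swap)).stronglyMeasurable.integral_prod_right'.measurable

variable (μ) [SFinite μ]

/-- The annihilation operator `(a(f) g)(s) = ∫ f(y) g(y, s) dμ(y)` with profile `f ∈ L¹(μ)`, as a
bounded bilinear map. -/
noncomputable def annihilation : (X →₁[μ] ℂ) →L[ℂ] ConfigFun X →L[ℂ] ConfigFun X :=
  LinearMap.mkContinuous₂
    (LinearMap.mk₂ ℂ
      (fun f g => ofBound (fun s => ∫ y, f y * g (y ::ₘ s) ∂μ) ((∫ y, ‖f y‖ ∂μ) * ‖g‖)
        (norm_integral_mul_cons_le (L1.integrable_coeFn f) g)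
        (measurable_integral_mul_cons (Lp.stronglyMeasurable f).measurable g))
      (fun f f' g => by
        ext s
        simp only [ofBound_apply, add_apply]
        rw [← integral_add (g.integrable_mul_cons (L1.integrable_coeFn f) s)
          (g.integrable_mul_cons (L1.integrable_coeFn f') s)]
        refine integral_congr_ae ?_
        filter_upwards [Lp.coeFn_add f f'] with y hy
        rw [hy, Pi.add_apply, add_mul])
      (fun c f g => by
        ext s
        simp only [ofBound_apply, smul_apply]
        rw [← integral_const_mul]
        refine integral_congr_ae ?_
        filter_upwards [Lp.coeFn_smul c f] with y hy
        rw [hy, Pi.smul_apply, smul_eq_mul, mul_assoc])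
      (fun f g g' => by
        ext s
        simp only [ofBound_apply, add_apply, mul_add]
        exact integral_add (g.integrable_mul_cons (L1.integrable_coeFn f) s)
          (g'.integrable_mul_cons (L1.integrable_coeFn f) s))
      (fun c f g => by
        ext s
        simp only [ofBound_apply, smul_apply, mul_left_comm _ c]
        exact integral_const_mul c _))
    1 fun f g => by
      rw [one_mul, L1.norm_eq_integral_norm]
      exact norm_le (by positivity) (norm_integral_mul_cons_le (L1.integrable_coeFn f) g)

theorem annihilation_apply (f : X →₁[μ] ℂ) (g : ConfigFun X) (s : Multiset X) :
    annihilation μ f g s = ∫ y, f y * g (y ::ₘ s) ∂μ :=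
  rfl

theorem annihilation_toL1_apply (hf : Integrable f μ) (g : ConfigFun X) (s : Multiset X) :
    annihilation μ (hf.toL1 f) g s = ∫ y, f y * g (y ::ₘ s) ∂μ := by
  rw [annihilation_apply]
  refine integral_congr_ae ?_
  filter_upwards [hf.coeFn_toL1] with y hy
  rw [hy]

theorem norm_annihilation_le (f : X →₁[μ] ℂ) : ‖annihilation μ f‖ ≤ ‖f‖ := by
  simpa using (annihilation μ).le_of_opNorm_le
    (LinearMap.mkContinuous₂_norm_le _ zero_le_one _) f

theorem commute_annihilation (f h : X →₁[μ] ℂ) :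
    Commute (annihilation μ f) (annihilation μ h) := by
  ext g s
  simp only [mul_apply_eq_comp, annihilation_apply, ← integral_const_mul]
  rw [integral_integral_swap]
  · simp only [Multiset.cons_swap, mul_left_comm]
  · refine ((L1.integrable_coeFn f).mul_prod (L1.integrable_coeFn h)).mul_bdd (c := ‖g‖)
      ((g.measurable_cons_cons s).comp measurable_swap).aestronglyMeasurable
      (.of_forall fun p => g.norm_apply_le _) |>.congr (.of_forall fun p => ?_)
    simp [Function.uncurry, mul_assoc]

theorem exp_smul_annihilation_add (z : ℂ) (f h : X →₁[μ] ℂ) :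
    NormedSpace.exp (z • annihilation μ (f + h)) =
      NormedSpace.exp (z • annihilation μ f) * NormedSpace.exp (z • annihilation μ h) := by
  let +nondep : NormedAlgebra ℚ (ConfigFun X →L[ℂ] ConfigFun X) := .restrictScalars ℚ ℂ _
  rw [map_add, smul_add]
  exact NormedSpace.exp_add_of_commute
    (((commute_annihilation μ f h).smul_left z).smul_right z)

end Annihilation

section FiniteMeasure

variable (μ : Measure X) [IsFiniteMeasure μ]

/-- The operator `(a(1) g)(s) = ∫ g(y, s) dμ(y)`. -/
noncomputable def integrateOut : ConfigFun X →L[ℂ] ConfigFun X :=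
  annihilation μ ((integrable_const 1).toL1 fun _ => 1)

theorem integrateOut_apply (g : ConfigFun X) (s : Multiset X) :
    integrateOut μ g s = ∫ y, g (y ::ₘ s) ∂μ := by
  simp only [integrateOut, annihilation_toL1_apply, one_mul]

theorem integrateOut_pow_apply_zero (k : ℕ) (g : ConfigFun X) :
    (integrateOut μ ^ k) g 0 = ∫ v : Fin k → X, g ↑(List.ofFn v) ∂Measure.pi fun _ => μ := by
  induction k generalizing g with
  | zero => simp [Measure.real]
  | succ k ih =>
    rw [pow_succ, mul_apply_eq_comp, ih,
      ← (measurePreserving_piFinSuccAbove (fun _ : Fin (k + 1) => μ) 0).symm.integral_comp',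
      integral_prod_symm]
    · simp [integrateOut_apply, Fin.insertNthEquiv]
    · refine .of_bound ((g.measurable_ofFn (k + 1)).comp
        (MeasurableEquiv.measurable _)).aestronglyMeasurable ‖g‖ (.of_forall fun p => ?_)
      exact g.norm_apply_le _

theorem integrateOut_pow_apply_cons {f : X → ℂ} (hf : Integrable f μ) {x : X} {c : ℂ} (k : ℕ)
    {g h : ConfigFun X} (hgh : ∀ s, g (x ::ₘ s) = c * (s.map f).prod * h s) (s : Multiset X) :
    (integrateOut μ ^ k) g (x ::ₘ s) =
      c * (s.map f).prod * (annihilation μ (hf.toL1 f) ^ k) h s := by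
  induction k generalizing g h with
  | zero => exact hgh s
  | succ k ih =>
    rw [pow_succ, pow_succ, mul_apply_eq_comp, mul_apply_eq_comp]
    refine ih fun t => ?_
    rw [integrateOut_apply, annihilation_toL1_apply, ← integral_const_mul]
    refine integral_congr_ae (.of_forall fun y => ?_)
    simp only [Multiset.cons_swap y x t, hgh, Multiset.map_cons, Multiset.prod_cons]
    ring

theorem exp_smul_annihilation_eq_mul_integrateOut {f : X → ℂ} (hf : Integrable f μ) (z : ℂ) :
    NormedSpace.exp (z • annihilation μ (hf.toL1 f)) =
      NormedSpace.exp (z • annihilation μ ((hf.sub (integrable_const 1)).toL1 (f - fun _ => 1))) *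
        NormedSpace.exp (z • integrateOut μ) := by
  rw [integrateOut, ← exp_smul_annihilation_add, Integrable.toL1_sub f _ hf (integrable_const 1),
    sub_add_cancel]

/-- The Kirkwood–Salsburg equation. -/
theorem exp_smul_integrateOut_apply_cons {f : X → ℂ} (hf : Integrable f μ) {x : X} {c : ℂ}
    {g h : ConfigFun X} (hgh : ∀ s, g (x ::ₘ s) = c * (s.map f).prod * h s) (z : ℂ)
    (s : Multiset X) :
    NormedSpace.exp (z • integrateOut μ) g (x ::ₘ s) = c * (s.map f).prod *
      NormedSpace.exp (z • annihilation μ ((hf.sub (integrable_const 1)).toL1 (f - fun _ => 1)))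
        (NormedSpace.exp (z • integrateOut μ) h) s := by
  rw [← mul_apply_eq_comp, ← exp_smul_annihilation_eq_mul_integrateOut μ hf]
  refine (hasSum_exp_smul_apply z (integrateOut μ) g (x ::ₘ s)).unique ?_
  simpa only [integrateOut_pow_apply_cons μ hf _ hgh, mul_left_comm] using
    (hasSum_exp_smul_apply z (annihilation μ (hf.toL1 f)) h s).mul_left (c * (s.map f).prod)

end FiniteMeasure

end ConfigFun

end ConfigurationFunctions

section PairInteractions

/-- A pair interaction on `X`, given by its Boltzmann factor `factor x y`, which plays the role
of `e^{-β u(x - y)}`. -/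
structure PairInteraction (X : Type*) [MeasurableSpace X] where
  factor : X → X → ℝ
  factor_comm : ∀ x y, factor x y = factor y x
  factor_nonneg : ∀ x y, 0 ≤ factor x y
  measurable_factor : Measurable fun p : X × X => factor p.1 p.2

namespace PairInteraction

variable {X : Type*} [MeasurableSpace X] (I : PairInteraction X)

/-- The total weight of a configuration: the product of `factor` over all unordered pairs. -/
def weight (s : Multiset X) : ℝ :=
  s.recOn 1 (fun x t W => (t.map (I.factor x)).prod * W) fun x y t W => by
    simp only [Multiset.map_cons, Multiset.prod_cons, I.factor_comm x y, heq_eq_eq]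
    ring

@[simp]
theorem weight_zero : I.weight 0 = 1 :=
  rfl

@[simp]
theorem weight_cons (x : X) (s : Multiset X) :
    I.weight (x ::ₘ s) = (s.map (I.factor x)).prod * I.weight s := by
  simp only [weight, Multiset.recOn_cons]

@[simp]
theorem weight_singleton (x : X) : I.weight {x} = 1 := by
  simpa using I.weight_cons x 0

theorem prod_map_factor_nonneg (x : X) (s : Multiset X) : 0 ≤ (s.map (I.factor x)).prod :=
  Multiset.prod_nonneg fun a ha => by
    obtain ⟨y, -, rfl⟩ := Multiset.mem_map.1 ha
    exact I.factor_nonneg x y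

theorem ofReal_prod_map_factor (x : X) (s : Multiset X) :
    (((s.map (I.factor x)).prod : ℝ) : ℂ) = (s.map fun y => (I.factor x y : ℂ)).prod := by
  simpa using map_multiset_prod Complex.ofRealHom (s.map (I.factor x))

theorem weight_nonneg (s : Multiset X) : 0 ≤ I.weight s := by
  induction s using Multiset.induction with
  | empty => exact zero_le_one
  | cons x s ih => rw [weight_cons]; exact mul_nonneg (I.prod_map_factor_nonneg x s) ih

theorem measurable_weight_ofFn (k : ℕ) :
    Measurable fun v : Fin k → X => I.weight ↑(List.ofFn v) := by
  induction k with
  | zero => exact measurable_const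
  | succ k ih =>
    simp only [List.ofFn_succ, ← Multiset.cons_coe, weight_cons, Multiset.map_coe,
      Multiset.prod_coe, List.map_ofFn, List.prod_ofFn, Function.comp_def]
    refine .mul (Finset.measurable_prod _ fun i _ => ?_) ?_
    · exact I.measurable_factor.comp
        ((measurable_pi_apply (X := fun _ => X) 0).prodMk (measurable_pi_apply i.succ))
    · exact ih.comp (measurable_pi_lambda _ fun i => measurable_pi_apply i.succ)

theorem prod_prod_erase_eq_weight_sq [DecidableEq X] (s : Multiset X) :
    (s.map fun x => ((s.erase x).map (I.factor x)).prod).prod = I.weight s ^ 2 := by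
  induction s using Multiset.induction with
  | empty => simp
  | cons a s ih =>
    have hsplit : ∀ x ∈ s, (((a ::ₘ s).erase x).map (I.factor x)).prod =
        I.factor a x * ((s.erase x).map (I.factor x)).prod := fun x hx => by
      rw [Multiset.erase_cons_tail_of_mem hx, Multiset.map_cons, Multiset.prod_cons,
        I.factor_comm]
    rw [Multiset.map_cons, Multiset.prod_cons, Multiset.erase_cons_head,
      Multiset.map_congr rfl hsplit, Multiset.prod_map_mul, ih, weight_cons]
    ring

/-- Ruelle's selection of a particle whose total interaction with the others is bounded below:
the geometric mean over the particles is at most `A ^ 2`. -/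
theorem exists_eq_cons_prod_map_factor_le {A : ℝ} (hA : 0 < A) {s : Multiset X} (hs : s ≠ 0)
    (hW : I.weight s ≤ A ^ Multiset.card s) :
    ∃ x t, s = x ::ₘ t ∧ (t.map (I.factor x)).prod ≤ A ^ 2 := by
  classical
  by_contra! hlt
  have hprod : (s.map fun _ => A ^ 2).prod <
      (s.map fun x => ((s.erase x).map (I.factor x)).prod).prod :=
    Multiset.prod_map_lt_prod_map hs _ _ (fun _ _ => by positivity)
      fun x hx => hlt x (s.erase x) (Multiset.cons_erase hx).symm
  rw [prod_prod_erase_eq_weight_sq, Multiset.map_const', Multiset.prod_replicate, ← pow_mul,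
    mul_comm, pow_mul] at hprod
  exact hprod.not_ge (pow_le_pow_left₀ (I.weight_nonneg s) hW 2)

/-- The grand canonical partition function at activity `z`, with reference measure `μ`. -/
noncomputable def partitionFunction (μ : Measure X) (z : ℂ) : ℂ :=
  ∑' k : ℕ, z ^ k / k.factorial *
    ∫ v : Fin k → X, (I.weight ↑(List.ofFn v) : ℂ) ∂Measure.pi fun _ => μ

/-- Stability in multiplicative form, with `A` playing the role of `e^{β B}`. -/
def HasStabilityBound (A : ℝ) : Prop :=
  ∀ s, I.weight s ≤ A ^ Multiset.card s

variable {I} {A : ℝ}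

theorem HasStabilityBound.factor_le (hA : I.HasStabilityBound A) (x y : X) :
    I.factor x y ≤ A ^ 2 := by
  simpa using hA {x, y}

theorem HasStabilityBound.integrable_factor (hA : I.HasStabilityBound A) (μ : Measure X)
    [IsFiniteMeasure μ] (x : X) : Integrable (fun y => (I.factor x y : ℂ)) μ := by
  refine .of_bound (Complex.measurable_ofReal.comp
    (I.measurable_factor.comp measurable_prodMk_left)).aestronglyMeasurable (A ^ 2)
    (.of_forall fun y => ?_)
  rw [Complex.norm_of_nonneg (I.factor_nonneg x y)]
  exact hA.factor_le x y

variable {ζ : ℝ}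

/-- The bounded function `s ↦ weight s / ζ ^ |s|`. -/
noncomputable def scaledWeight (hζ : I.HasStabilityBound ζ) : ConfigFun X :=
  .ofBound (fun s => (I.weight s / ζ ^ Multiset.card s : ℝ)) 1
    (fun s => by
      have hpow : 0 ≤ ζ ^ Multiset.card s := (I.weight_nonneg s).trans (hζ s)
      rw [Complex.norm_of_nonneg (div_nonneg (I.weight_nonneg s) hpow)]
      exact div_le_one_of_le₀ (hζ s) hpow)
    fun k => by
      simp only [Multiset.coe_card, List.length_ofFn]
      exact Complex.measurable_ofReal.comp ((I.measurable_weight_ofFn k).div_const _)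

theorem scaledWeight_apply (hζ : I.HasStabilityBound ζ) (s : Multiset X) :
    scaledWeight hζ s = (I.weight s : ℂ) / (ζ : ℂ) ^ Multiset.card s :=
  (Complex.ofReal_div _ _).trans (by rw [Complex.ofReal_pow])

theorem scaledWeight_cons (hζ : I.HasStabilityBound ζ) (x : X)
    (s : Multiset X) :
    scaledWeight hζ (x ::ₘ s) =
      (ζ : ℂ)⁻¹ * (s.map fun y => (I.factor x y : ℂ)).prod * scaledWeight hζ s := by
  rw [scaledWeight_apply, scaledWeight_apply, weight_cons, Multiset.card_cons, pow_succ,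
    Complex.ofReal_mul, ofReal_prod_map_factor]
  ring

variable (μ : Measure X) [IsFiniteMeasure μ]

/-- The function `s ↦ ζ ^ (-|s|) ∑ₖ zᵏ / k! ∫ weight (y₁, …, yₖ, s) dμᵏ(y)`, that is, the
correlation function of the grand canonical ensemble multiplied by the partition function and
divided by `(z ζ) ^ |s|`. -/
noncomputable def correlation (hζ : I.HasStabilityBound ζ) (z : ℂ) :
    ConfigFun X :=
  NormedSpace.exp ((z * ζ) • ConfigFun.integrateOut μ) (scaledWeight hζ)

theorem correlation_zero (hζ : I.HasStabilityBound ζ) (hζ₀ : ζ ≠ 0) (z : ℂ) :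
    correlation μ hζ z 0 = I.partitionFunction μ z := by
  refine (ConfigFun.hasSum_exp_smul_apply _ _ _ _).tsum_eq.symm.trans (tsum_congr fun k => ?_)
  have hpow : (ζ : ℂ) ^ k ≠ 0 := pow_ne_zero k (Complex.ofReal_ne_zero.2 hζ₀)
  simp only [ConfigFun.integrateOut_pow_apply_zero, scaledWeight_apply, Multiset.coe_card,
    List.length_ofFn, integral_div]
  rw [mul_pow]
  field_simp

theorem correlation_ne_zero (hζ : I.HasStabilityBound ζ) (z : ℂ) :
    correlation μ hζ z ≠ 0 := fun h => by
  have hG : scaledWeight hζ 0 = 0 := by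
    rw [eq_zero_of_exp_apply_eq_zero h, ConfigFun.zero_apply]
  simp [scaledWeight_apply] at hG

theorem norm_toL1_factor_sub_one_le {x : X} (hx : Integrable (fun y => (I.factor x y : ℂ)) μ)
    {C : ℝ} (hC : ∫ y, |I.factor x y - 1| ∂μ ≤ C) :
    ‖(hx.sub (integrable_const 1)).toL1 ((fun y => (I.factor x y : ℂ)) - fun _ => 1)‖ ≤ C := by
  rw [L1.norm_of_fun_eq_integral_norm]
  refine (integral_congr_ae (.of_forall fun y => ?_)).trans_le hC
  simp only [Pi.sub_apply, ← Complex.ofReal_one, ← Complex.ofReal_sub, Complex.norm_real,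
    Real.norm_eq_abs]

theorem norm_correlation_cons_le (hζ : I.HasStabilityBound ζ) (hζ₀ : 0 ≤ ζ) {C : ℝ} {x : X}
    (hC : ∫ y, |I.factor x y - 1| ∂μ ≤ C) (z : ℂ) (s : Multiset X) :
    ‖correlation μ hζ z (x ::ₘ s)‖ ≤ ζ⁻¹ * (s.map (I.factor x)).prod *
      (Real.exp (‖z‖ * ζ * C) * ‖correlation μ hζ z‖) := by
  have hfactor := hζ.integrable_factor μ x
  set mayerL1 := (hfactor.sub (integrable_const 1)).toL1 _
  have hop : ‖(z * ζ) • ConfigFun.annihilation μ mayerL1‖ ≤ ‖z‖ * ζ * C := by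
    rw [norm_smul, norm_mul, Complex.norm_of_nonneg hζ₀]
    gcongr
    exact (ConfigFun.norm_annihilation_le μ mayerL1).trans
      (norm_toL1_factor_sub_one_le μ hfactor hC)
  have hprefactor : ‖(ζ : ℂ)⁻¹ * (s.map fun y => (I.factor x y : ℂ)).prod‖ =
      ζ⁻¹ * (s.map (I.factor x)).prod := by
    rw [← ofReal_prod_map_factor, ← Complex.ofReal_inv, ← Complex.ofReal_mul,
      Complex.norm_of_nonneg (mul_nonneg (inv_nonneg.2 hζ₀) (I.prod_map_factor_nonneg x s))]
  rw [correlation, ConfigFun.exp_smul_integrateOut_apply_cons μ hfactor (scaledWeight_cons hζ x),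
    norm_mul, hprefactor]
  refine mul_le_mul_of_nonneg_left ?_
    (mul_nonneg (inv_nonneg.2 hζ₀) (I.prod_map_factor_nonneg x s))
  exact ((ConfigFun.norm_apply_le _ s).trans (norm_exp_apply_le _ _)).trans (by gcongr)

theorem norm_correlation_le_of_apply_zero_eq_zero (hA₀ : 0 < A)
    (hA : I.HasStabilityBound A)
    (hζ : I.HasStabilityBound ζ) (hζ₀ : 0 ≤ ζ) {C : ℝ}
    (hC : ∀ x, ∫ y, |I.factor x y - 1| ∂μ ≤ C) {z : ℂ} (h0 : correlation μ hζ z 0 = 0) :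
    ‖correlation μ hζ z‖ ≤
      ζ⁻¹ * A ^ 2 * (Real.exp (‖z‖ * ζ * C) * ‖correlation μ hζ z‖) := by
  refine ConfigFun.norm_le (by positivity) fun s => ?_
  obtain rfl | hs := eq_or_ne s 0
  · rw [h0, norm_zero]
    positivity
  obtain ⟨x, t, rfl, hx⟩ := I.exists_eq_cons_prod_map_factor_le hA₀ hs (hA s)
  refine (norm_correlation_cons_le μ hζ hζ₀ (hC x) z t).trans ?_
  gcongr

theorem partitionFunction_ne_zero {C : ℝ} (hA₁ : 1 ≤ A)
    (hA : I.HasStabilityBound A) (hC : ∀ x, ∫ y, |I.factor x y - 1| ∂μ ≤ C)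
    {z : ℂ} (hz : ‖z‖ * (Real.exp 1 * A ^ 2 * C) < 1) : I.partitionFunction μ z ≠ 0 := by
  have hA₀ : 0 < A := by positivity
  set ζ := Real.exp 1 * A ^ 2 with hζ_def
  have hAζ : A ≤ ζ := by
    nlinarith [Real.one_le_exp zero_le_one]
  have hζ₀ : 0 < ζ := by positivity
  have hζ : I.HasStabilityBound ζ := fun s =>
    (hA s).trans (pow_le_pow_left₀ hA₀.le hAζ _)
  have hq : ζ⁻¹ * A ^ 2 * Real.exp (‖z‖ * ζ * C) < 1 := by
    calc ζ⁻¹ * A ^ 2 * Real.exp (‖z‖ * ζ * C) = Real.exp (‖z‖ * (ζ * C) - 1) := by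
          rw [Real.exp_sub, hζ_def, ← mul_assoc]
          field_simp
      _ < 1 := Real.exp_lt_one_iff.2 (by linarith)
  rw [← correlation_zero μ hζ hζ₀.ne']
  intro h0
  have hP : 0 < ‖correlation μ hζ z‖ := norm_pos_iff.2 (correlation_ne_zero μ hζ z)
  have hle := norm_correlation_le_of_apply_zero_eq_zero μ hA₀ hA hζ hζ₀.le hC h0
  rw [← mul_assoc] at hle
  exact hle.not_gt (mul_lt_of_lt_one_left hP hq)

end PairInteraction

end PairInteractions

section Boltzmann

theorem boltz_zero {β : ℝ} : boltz β 0 = 1 := by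
  simp [boltz]

theorem boltz_nonneg {β : ℝ} (t : EReal) : 0 ≤ boltz β t := by
  unfold boltz
  split_ifs <;> positivity

theorem boltz_le {β : ℝ} (hβ : 0 ≤ β) {m : ℝ} {t : EReal} (h : (m : EReal) ≤ t) :
    boltz β t ≤ Real.exp (-β * m) := by
  unfold boltz
  split_ifs with ht
  · positivity
  · have hmt : m ≤ t.toReal := EReal.toReal_le_toReal h (EReal.coe_ne_bot m) ht
    exact Real.exp_le_exp.2 (mul_le_mul_of_nonpos_left hmt (neg_nonpos.2 hβ))

theorem measurable_boltz (β : ℝ) : Measurable (boltz β) :=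
  Measurable.ite (measurableSet_singleton ⊤) measurable_const
    (Real.measurable_exp.comp (measurable_const.mul measurable_ereal_toReal))

theorem boltz_add {β : ℝ} {a b : EReal} (ha : a ≠ ⊥) (hb : b ≠ ⊥) :
    boltz β (a + b) = boltz β a * boltz β b := by
  obtain rfl | ha' := eq_or_ne a ⊤
  · simp [boltz, EReal.top_add_of_ne_bot hb]
  obtain rfl | hb' := eq_or_ne b ⊤
  · simp [boltz, EReal.add_top_of_ne_bot ha]
  rw [boltz, boltz, boltz, if_neg (EReal.add_ne_top ha' hb'), if_neg ha', if_neg hb',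
    EReal.toReal_add ha' ha hb' hb, mul_add, Real.exp_add]

theorem ereal_sum_ne_bot {ι : Type*} {S : Finset ι} {a : ι → EReal} (ha : ∀ i, a i ≠ ⊥) :
    ∑ i ∈ S, a i ≠ ⊥ := by
  induction S using Finset.cons_induction with
  | empty => simp
  | cons i S hi ih => simp [EReal.add_eq_bot_iff, ha i, ih]

theorem boltz_sum {β : ℝ} {ι : Type*} {S : Finset ι} {a : ι → EReal} (ha : ∀ i, a i ≠ ⊥) :
    boltz β (∑ i ∈ S, a i) = ∏ i ∈ S, boltz β (a i) := by
  induction S using Finset.cons_induction with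
  | empty => simp [boltz_zero]
  | cons i S hi ih =>
    rw [Finset.sum_cons, Finset.prod_cons, boltz_add (ha i) (ereal_sum_ne_bot ha), ih]

end Boltzmann

section PairPotentials

variable {d : ℕ} {u : (Fin d → ℝ) → EReal} {β B : ℝ}

theorem Ham_succ (k : ℕ) (v : Fin (k + 1) → Fin d → ℝ) :
    Ham u (k + 1) v = ∑ j : Fin k, u (v 0 - v j.succ) + Ham u k fun i => v i.succ := by
  simp only [Ham, Finset.sum_filter, Fintype.sum_prod_type]
  rw [Fin.sum_univ_succ]
  congr 1
  · simp [Fin.sum_univ_succ]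
  · refine Finset.sum_congr rfl fun i _ => ?_
    simp [Fin.sum_univ_succ]

theorem IsStable.nonneg (hstab : IsStable u B) : 0 ≤ B := by
  have hHam : Ham u 1 0 = 0 := by simp [Ham]
  have h := hstab 1 0
  rw [hHam, Nat.cast_one, mul_one] at h
  exact neg_nonpos.1 (EReal.coe_le_coe_iff.1 h)

namespace IsPairPotential

theorem ne_bot (hu : IsPairPotential u) (x : Fin d → ℝ) : u x ≠ ⊥ := by
  obtain ⟨-, -, m, hm⟩ := hu
  exact ne_bot_of_le_ne_bot (EReal.coe_ne_bot m) (hm x)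

/-- The Boltzmann factor of a pair potential. -/
noncomputable def interaction (hu : IsPairPotential u) (β : ℝ) : PairInteraction (Fin d → ℝ) where
  factor x y := boltz β (u (x - y))
  factor_comm x y := by rw [← hu.2.1, neg_sub]
  factor_nonneg x y := boltz_nonneg _
  measurable_factor :=
    (measurable_boltz β).comp (hu.1.comp (measurable_fst.sub measurable_snd))

theorem weight_interaction (hu : IsPairPotential u) (k : ℕ) (v : Fin k → Fin d → ℝ) :
    (hu.interaction β).weight ↑(List.ofFn v) = boltz β (Ham u k v) := by
  induction k with
  | zero => simp [Ham, boltz_zero]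
  | succ k ih =>
    have hHam : Ham u k (fun i => v i.succ) ≠ ⊥ := ereal_sum_ne_bot fun _ => hu.ne_bot _
    rw [Ham_succ, boltz_add (ereal_sum_ne_bot fun _ => hu.ne_bot _) hHam,
      boltz_sum fun _ => hu.ne_bot _, ← ih, List.ofFn_succ, ← Multiset.cons_coe,
      PairInteraction.weight_cons, Multiset.map_coe, Multiset.prod_coe, List.map_ofFn,
      List.prod_ofFn]
    rfl

theorem hasStabilityBound (hu : IsPairPotential u) (hβ : 0 ≤ β) (hstab : IsStable u B) :
    (hu.interaction β).HasStabilityBound (Real.exp (β * B)) := fun s => by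
  induction s using Quotient.inductionOn with | _ l => ?_
  calc (hu.interaction β).weight ↑l = boltz β (Ham u l.length l.get) := by
        rw [← weight_interaction hu, List.ofFn_get]
    _ ≤ Real.exp (-β * -(B * l.length)) := boltz_le hβ (hstab l.length l.get)
    _ = Real.exp (β * B) ^ l.length := by
        rw [← Real.exp_nat_mul]
        ring_nf

theorem integral_abs_interaction_sub_one_le (hu : IsPairPotential u) (hreg : IsRegularPP β u)
    (Λ : Set (Fin d → ℝ)) (x : Fin d → ℝ) :
    ∫ y in Λ, |(hu.interaction β).factor x y - 1| ≤ Creg β u :=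
  calc ∫ y in Λ, |mayer β u (x - y)|
    _ ≤ ∫ y, |mayer β u (x - y)| :=
        setIntegral_le_integral (hreg.comp_sub_left x).abs (.of_forall fun _ => abs_nonneg _)
    _ = Creg β u := integral_sub_left_eq_self (fun y => |mayer β u y|) volume x

theorem partitionFunction_interaction (hu : IsPairPotential u) (Λ : Set (Fin d → ℝ)) (z : ℂ) :
    (hu.interaction β).partitionFunction (volume.restrict Λ) z = Xi β u Λ z := by
  refine tsum_congr fun k => ?_
  rw [← Measure.restrict_pi_pi, ← integral_complex_ofReal]
  simp only [weight_interaction]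
  rfl

end IsPairPotential

theorem statement0_general (hβ : 0 ≤ β) (hu : IsPairPotential u) (hstab : IsStable u B)
    (hreg : IsRegularPP β u) {Λ : Set (Fin d → ℝ)} (hΛ : volume Λ ≠ ⊤) {z : ℂ}
    (hz : ‖z‖ * (Real.exp (2 * β * B + 1) * Creg β u) < 1) :
    Xi β u Λ z ≠ 0 := by
  have : IsFiniteMeasure (volume.restrict Λ) := isFiniteMeasure_restrict.2 hΛ
  have hexp : Real.exp 1 * Real.exp (β * B) ^ 2 = Real.exp (2 * β * B + 1) := by
    rw [← Real.exp_nat_mul, ← Real.exp_add]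
    congr 1
    push_cast
    ring
  rw [← hu.partitionFunction_interaction]
  exact PairInteraction.partitionFunction_ne_zero _
    (Real.one_le_exp (mul_nonneg hβ hstab.nonneg)) (hu.hasStabilityBound hβ hstab)
    (hu.integral_abs_interaction_sub_one_le hreg Λ) (by rwa [hexp])

end PairPotentials

/-- For a stable and regular pair potential, the grand canonical
partition function `Ξ_Λ(z)` has no zeros in the disk `|z| < z₀ = (e^{2βB+1} C_β(u))⁻¹`,
i.e. whenever `|z| · e^{2βB+1} C_β(u) < 1`. -/
theorem statement0 {d : ℕ} (hd : 1 ≤ d) (β B : ℝ) (hβ : 0 < β) (hB : 0 ≤ B)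
    (u : (Fin d → ℝ) → EReal) (hu : IsPairPotential u)
    (hstab : IsStable u B) (hreg : IsRegularPP β u)
    (Λ : Set (Fin d → ℝ)) (hΛb : IsBounded Λ) (hΛm : MeasurableSet Λ)
    (z : ℂ) (hz : ‖z‖ * (Real.exp (2 * β * B + 1) * Creg β u) < 1) :
    Xi β u Λ z ≠ 0 := by
  exact statement0_general hβ.le hu hstab hreg hΛb.measure_lt_top.ne hz
end

section
/- Let Λ ⊂ ℝ^d be bounded and measurable, n ≥ 1, let j^{(k)} : Λ^k → [0,∞] (k ≥ 0) be measurable functions, each symmetric under permutation of its arguments, and let F : (ℝ^d)^n × M → [0,∞] be measurable, where M denotes the finite multisets of points of ℝ^d. Then Σ_{k=n}^∞ (1/k!) ∫_{Λ^k} [ Σ_{(i_1,…,i_n) pairwise distinct indices in {1,…,k}} F( (y_{i_1},…,y_{i_n}), {y_1,…,y_k} ) ] j^{(k)}(y_1,…,y_k) dy_1⋯dy_k = ∫_{Λ^n} Σ_{k=0}^∞ (1/k!) ∫_{Λ^k} F( (x_1,…,x_n), {x_1,…,x_n} ∪ {y_1,…,y_k} ) j^{(n+k)}(x_1,…,x_n,y_1,…,y_k)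 dy_1⋯dy_k dx_1⋯dx_n, with both sides valued in [0,∞]. -/
open MeasureTheory Bornology

open scoped ENNReal

/-!
By permutation symmetry every `n`-tuple of pairwise distinct indices in `{1, …, n + k}` contributes
the same integral as `(1, …, n)`. There are `(n + k)! / k!` such tuples, so after multiplication by
`1 / (n + k)!` the factor `1 / k!` remains, and Tonelli splits off the first `n` variables.
-/

section ProductMeasure

variable {X : Type*} [MeasurableSpace X] (μ : Measure X) [SigmaFinite μ]

lemma measurePreserving_comp_equiv {ι κ : Type*} [Fintype ι] [Fintype κ] (e : κ ≃ ι) :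
    MeasurePreserving (fun y : ι → X => y ∘ e) (Measure.pi fun _ => μ) (Measure.pi fun _ => μ) :=
  measurePreserving_arrowCongr' (fun _ => μ) (fun _ => μ) e.symm (MeasurableEquiv.refl X)
    fun _ => MeasurePreserving.id μ

lemma measurePreserving_finAppend (n k : ℕ) :
    MeasurePreserving (fun p : (Fin n → X) × (Fin k → X) => Fin.append p.1 p.2)
      ((Measure.pi fun _ => μ).prod (Measure.pi fun _ => μ)) (Measure.pi fun _ => μ) := by
  have append_eq : (fun p : (Fin n → X) × (Fin k → X) => Fin.append p.1 p.2) =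
      (fun z : Fin n ⊕ Fin k → X => z ∘ finSumFinEquiv.symm) ∘
        (MeasurableEquiv.sumPiEquivProdPi fun _ => X).symm := by
    funext p i
    refine Fin.addCases (fun a => ?_) (fun b => ?_) i <;>
      simp [MeasurableEquiv.coe_sumPiEquivProdPi_symm]
  rw [append_eq]
  exact (measurePreserving_comp_equiv μ finSumFinEquiv.symm).comp
    (measurePreserving_sumPiEquivProdPi_symm fun _ => μ)

lemma measurable_lintegral_finAppend {n k : ℕ} {G : (Fin (n + k) → X) → ℝ≥0∞}
    (hG : Measurable G) :
    Measurable fun x : Fin n → X => ∫⁻ y, G (Fin.append x y) ∂Measure.pi (fun _ => μ) :=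
  (hG.comp (measurePreserving_finAppend μ n k).measurable).lintegral_prod_right'

lemma lintegral_pi_fin_add {n k : ℕ} {G : (Fin (n + k) → X) → ℝ≥0∞} (hG : Measurable G) :
    ∫⁻ y, G y ∂Measure.pi (fun _ => μ) =
      ∫⁻ x, ∫⁻ y, G (Fin.append x y) ∂Measure.pi (fun _ => μ) ∂Measure.pi (fun _ => μ) := by
  have append_preserving := measurePreserving_finAppend μ n k
  rw [← append_preserving.lintegral_comp hG]
  exact lintegral_prod _ (hG.comp append_preserving.measurable).aemeasurable

end ProductMeasure

section Symmetrization

variable {X ι κ : Type*}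

lemma exists_perm_comp_embedding_eq {M : Type*} [Finite κ] {Φ : (κ → X) → (ι → X) → M}
    (hΦ : ∀ (σ : Equiv.Perm ι) x y, Φ x (y ∘ σ) = Φ x y) (f g : κ ↪ ι) :
    ∃ σ : Equiv.Perm ι, ∀ y, Φ (y ∘ g) y = Φ ((y ∘ σ) ∘ f) (y ∘ σ) := by
  obtain ⟨σ, hσ⟩ := Equiv.Perm.exists_extending_pair f g f.injective g.injective
  refine ⟨σ, fun y => ?_⟩
  have comp_eq : (y ∘ σ) ∘ f = y ∘ g := funext fun a => congrArg y (hσ a)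
  rw [comp_eq, hΦ]

lemma lintegral_sum_embedding [Fintype ι] [Fintype κ] [MeasurableSpace X] (μ : Measure X)
    [SigmaFinite μ] {Φ : (κ → X) → (ι → X) → ℝ≥0∞}
    (hΦ : ∀ (σ : Equiv.Perm ι) x y, Φ x (y ∘ σ) = Φ x y) (f : κ ↪ ι)
    (hf : Measurable fun y => Φ (y ∘ f) y) :
    ∫⁻ y, ∑ g : κ ↪ ι, Φ (y ∘ g) y ∂Measure.pi (fun _ => μ) =
      (Fintype.card ι).descFactorial (Fintype.card κ) *
        ∫⁻ y, Φ (y ∘ f) y ∂Measure.pi (fun _ => μ) := by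
  choose σ hσ using exists_perm_comp_embedding_eq hΦ f
  have perm_preserving (g : κ ↪ ι) := measurePreserving_comp_equiv μ (σ g)
  have term_measurable (g : κ ↪ ι) : Measurable fun y => Φ (y ∘ g) y := by
    rw [funext (hσ g)]
    exact hf.comp (perm_preserving g).measurable
  have term_integral (g : κ ↪ ι) : ∫⁻ y, Φ (y ∘ g) y ∂Measure.pi (fun _ => μ) =
      ∫⁻ y, Φ (y ∘ f) y ∂Measure.pi (fun _ => μ) := by
    rw [funext (hσ g)]
    exact (perm_preserving g).lintegral_comp hf
  rw [lintegral_finsetSum _ fun g _ => term_measurable g]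
  simp only [term_integral, Finset.sum_const, Finset.card_univ, Fintype.card_embedding_eq,
    nsmul_eq_mul]

end Symmetrization

lemma inv_factorial_add_mul_descFactorial (n k : ℕ) :
    ((n + k).factorial : ℝ≥0∞)⁻¹ * (n + k).descFactorial n = (k.factorial : ℝ≥0∞)⁻¹ := by
  have factorial_eq : k.factorial * (n + k).descFactorial n = (n + k).factorial := by
    simpa only [Nat.add_sub_cancel_left] using
      Nat.factorial_mul_descFactorial (Nat.le_add_right n k)
  have descFactorial_ne_zero : ((n + k).descFactorial n : ℝ≥0∞) ≠ 0 :=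
    Nat.cast_ne_zero.2 (Nat.descFactorial_pos.2 (Nat.le_add_right n k)).ne'
  rw [← factorial_eq, Nat.cast_mul, ENNReal.mul_inv (.inr (ENNReal.natCast_ne_top _))
    (.inr descFactorial_ne_zero), mul_assoc,
    ENNReal.inv_mul_cancel descFactorial_ne_zero (ENNReal.natCast_ne_top _), mul_one]

lemma finAppend_comp_castAdd {X : Type*} {n k : ℕ} (x : Fin n → X) (y : Fin k → X) :
    Fin.append x y ∘ Fin.castAdd k = x :=
  funext (Fin.append_left x y)

lemma inv_factorial_mul_lintegral_sum_embedding {X : Type*} [MeasurableSpace X] (μ : Measure X)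
    [SigmaFinite μ] {n k : ℕ} {Φ : (Fin n → X) → (Fin (n + k) → X) → ℝ≥0∞}
    (hΦ : ∀ (σ : Equiv.Perm (Fin (n + k))) x y, Φ x (y ∘ σ) = Φ x y)
    (hΦm : Measurable fun y => Φ (y ∘ Fin.castAdd k) y) :
    ((n + k).factorial : ℝ≥0∞)⁻¹ *
        ∫⁻ y, ∑ g : Fin n ↪ Fin (n + k), Φ (y ∘ g) y ∂Measure.pi (fun _ => μ) =
      (k.factorial : ℝ≥0∞)⁻¹ *
        ∫⁻ x, ∫⁻ y, Φ x (Fin.append x y) ∂Measure.pi (fun _ => μ) ∂Measure.pi (fun _ => μ) := by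
  have symmetrized := lintegral_sum_embedding μ hΦ (Fin.castAddEmb k) hΦm
  have split := lintegral_pi_fin_add μ hΦm
  simp only [finAppend_comp_castAdd] at split
  rw [symmetrized, Fintype.card_fin, Fintype.card_fin, ← mul_assoc,
    inv_factorial_add_mul_descFactorial, ← split]
  rfl

lemma tsum_eq_tsum_add_left_of_lt_eq_zero {M : Type*} [AddCommMonoid M] [TopologicalSpace M]
    {f : ℕ → M} {n : ℕ} (hf : ∀ k < n, f k = 0) : ∑' k, f k = ∑' k, f (n + k) := by
  refine ((add_right_injective n).tsum_eq fun k hk => ?_).symm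
  obtain ⟨l, rfl⟩ := Nat.exists_eq_add_of_le (not_lt.1 (mt (hf k) hk))
  exact Set.mem_range_self l

lemma map_finAppend_univ_val {X : Type*} {n k : ℕ} (x : Fin n → X) (y : Fin k → X) :
    Multiset.map (Fin.append x y) Finset.univ.val =
      Multiset.map x Finset.univ.val + Multiset.map y Finset.univ.val := by
  simp only [Fin.univ_val_map, Multiset.coe_add, List.ofFn_fin_append]

theorem statement15_general {X : Type*} [MeasurableSpace X] (μ : Measure X) [SigmaFinite μ]
    (n : ℕ) (j : ∀ k : ℕ, (Fin k → X) → ℝ≥0∞) (hjmeas : ∀ k, Measurable (j k))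
    (hjsymm : ∀ (k : ℕ) (σ : Equiv.Perm (Fin k)) (y : Fin k → X), j k (y ∘ σ) = j k y)
    (F : (Fin n → X) → Multiset X → ℝ≥0∞)
    (hF : ∀ k : ℕ, Measurable fun y : Fin (n + k) → X =>
      F (y ∘ Fin.castAdd k) (Multiset.map y Finset.univ.val)) :
    ∑' k : ℕ, (Nat.factorial k : ℝ≥0∞)⁻¹ *
        ∫⁻ y, (∑ ι : Fin n ↪ Fin k, F (y ∘ ι) (Multiset.map y Finset.univ.val)) * j k y
          ∂Measure.pi (fun _ => μ) =
      ∫⁻ x, ∑' k : ℕ, (Nat.factorial k : ℝ≥0∞)⁻¹ *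
        ∫⁻ y, F x (Multiset.map x Finset.univ.val + Multiset.map y Finset.univ.val) *
            j (n + k) (Fin.append x y) ∂Measure.pi (fun _ => μ) ∂Measure.pi (fun _ => μ) := by
  let Φ (k : ℕ) (x : Fin n → X) (y : Fin k → X) : ℝ≥0∞ :=
    F x (Multiset.map y Finset.univ.val) * j k y
  have Φ_symm (k : ℕ) (σ : Equiv.Perm (Fin k)) (x y) : Φ k x (y ∘ σ) = Φ k x y := by
    simp only [Φ, hjsymm, ← Multiset.map_map, Multiset.map_univ_val_equiv]
  have Φ_measurable (k : ℕ) : Measurable fun y => Φ (n + k) (y ∘ Fin.castAdd k) y :=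
    (hF k).mul (hjmeas (n + k))
  have inner_measurable (k : ℕ) : Measurable fun x : Fin n → X =>
      ∫⁻ y, Φ (n + k) x (Fin.append x y) ∂Measure.pi (fun _ => μ) := by
    simpa only [finAppend_comp_castAdd] using measurable_lintegral_finAppend μ (Φ_measurable k)
  have term_eq_zero (k : ℕ) (hk : k < n) : (Nat.factorial k : ℝ≥0∞)⁻¹ *
      ∫⁻ y, ∑ ι : Fin n ↪ Fin k, Φ k (y ∘ ι) y ∂Measure.pi (fun _ => μ) = 0 := by
    have : IsEmpty (Fin n ↪ Fin k) :=
      Function.Embedding.isEmpty_of_card_lt (by simpa only [Fintype.card_fin])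
    simp
  simp only [Finset.sum_mul, ← map_finAppend_univ_val]
  calc
    _ = ∑' k : ℕ, ((n + k).factorial : ℝ≥0∞)⁻¹ *
          ∫⁻ y, ∑ ι : Fin n ↪ Fin (n + k), Φ (n + k) (y ∘ ι) y ∂Measure.pi (fun _ => μ) :=
      tsum_eq_tsum_add_left_of_lt_eq_zero term_eq_zero
    _ = ∑' k : ℕ, ∫⁻ x, (k.factorial : ℝ≥0∞)⁻¹ *
          ∫⁻ y, Φ (n + k) x (Fin.append x y) ∂Measure.pi (fun _ => μ) ∂Measure.pi (fun _ => μ) := by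
      refine tsum_congr fun k => ?_
      rw [lintegral_const_mul _ (inner_measurable k)]
      exact inv_factorial_mul_lintegral_sum_embedding μ (Φ_symm (n + k)) (Φ_measurable k)
    _ = _ := (lintegral_tsum fun k => ((inner_measurable k).const_mul _).aemeasurable).symm

lemma volume_restrict_cube {d : ℕ} (Λ : Set (Fin d → ℝ)) (k : ℕ) :
    (volume : Measure (Fin k → Fin d → ℝ)).restrict (cube Λ k) =
      Measure.pi fun _ => volume.restrict Λ :=
  Measure.restrict_pi_pi _ _

/-- reindexing identity underlying the finite-volume GNZ equation.
Here `F` takes an `n`-tuple and a finite multiset of points, `j^{(k)}` are symmetric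
measurable kernels, both sides are valued in `[0,∞]`, and the sum over `k ≥ n` (terms
with `k < n` vanish, having no injections `Fin n ↪ Fin k`) of the integrals over `Λ^k`
of the sums over pairwise distinct indices equals the iterated expression. -/
theorem statement15 {d : ℕ} (hd : 1 ≤ d)
    (Λ : Set (Fin d → ℝ)) (hΛb : IsBounded Λ) (hΛm : MeasurableSet Λ)
    (n : ℕ) (hn : 1 ≤ n)
    (j : ∀ k : ℕ, (Fin k → (Fin d → ℝ)) → ℝ≥0∞)
    (hjmeas : ∀ k, Measurable (j k))
    (hjsymm : ∀ (k : ℕ) (σ : Equiv.Perm (Fin k)) (y : Fin k → (Fin d → ℝ)),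
      j k (y ∘ σ) = j k y)
    (F : (Fin n → (Fin d → ℝ)) → Multiset (Fin d → ℝ) → ℝ≥0∞)
    (hF1 : ∀ (k : ℕ) (g : Fin n → Fin k),
      Measurable (fun y : Fin k → (Fin d → ℝ) =>
        F (fun a => y (g a)) (Multiset.map y Finset.univ.val)))
    (hF2 : ∀ k : ℕ,
      Measurable (fun p : (Fin n → (Fin d → ℝ)) × (Fin k → (Fin d → ℝ)) =>
        F p.1 (Multiset.map p.1 Finset.univ.val + Multiset.map p.2 Finset.univ.val))) :
    ∑' k : ℕ, (Nat.factorial k : ℝ≥0∞)⁻¹ *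
        ∫⁻ y in cube Λ k,
          (∑ ι : Fin n ↪ Fin k,
            F (fun a => y (ι a)) (Multiset.map y Finset.univ.val)) * j k y =
      ∫⁻ x in cube Λ n, ∑' k : ℕ, (Nat.factorial k : ℝ≥0∞)⁻¹ *
        ∫⁻ y in cube Λ k,
          F x (Multiset.map x Finset.univ.val + Multiset.map y Finset.univ.val) *
            j (n + k) (Fin.append x y) := by
  simp only [volume_restrict_cube]
  exact statement15_general (volume.restrict Λ) n j hjmeas hjsymm F
    fun k => hF1 (n + k) (Fin.castAdd k)
end
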